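/- arXiv:2107.14487 — 2 statements merged into one kernel-verified Lean document; each statement's English description precedes it below -/
import Mathlib

section
/- For all n, k ∈ ℕ: if the labelled sequent R, R_{[i]}wu ⊢ Γ is derivable in G3DS_n^k and there is an undirected i-path from w to u in R, then R ⊢ Γ is derivable in G3DS_n^k. -/
/-!
Labelled sequent calculi for deontic STIT logics `DS_n^k`.
-/

namespace DeonticStit

/-- Deontic STIT formulae in negation normal form, with agents in `Fin (n+1)`:
literals `p`, `p̄` and the connectives `∨`, `∧`, `□`, `◇`, `[i]`, `⟨i⟩`,
`⊗_i`, `⊖_i`. -/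
inductive SFml (n : ℕ) : Type
  | pos : ℕ → SFml n
  | neg : ℕ → SFml n
  | or  : SFml n → SFml n → SFml n
  | and : SFml n → SFml n → SFml n
  | box : SFml n → SFml n
  | dia : SFml n → SFml n
  | abox : Fin (n + 1) → SFml n → SFml n
  | adia : Fin (n + 1) → SFml n → SFml n
  | obl : Fin (n + 1) → SFml n → SFml n
  | per : Fin (n + 1) → SFml n → SFml n

/-- Multisets of relational atoms `R_[i] w u`. -/
abbrev RAt (n : ℕ) : Type := Multiset (Fin (n + 1) × ℕ × ℕ)

/-- Multisets of deontic atoms `I_{⊗_i} u`. -/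
abbrev DAt (n : ℕ) : Type := Multiset (Fin (n + 1) × ℕ)

/-- Multisets of labelled formulae `w : φ`. -/
abbrev SSeq (n : ℕ) : Type := Multiset (ℕ × SFml n)

/-- The label `v` occurs in the labelled sequent `RA, IA ⊢ Γ`. -/
def soccurs {n : ℕ} (v : ℕ) (RA : RAt n) (IA : DAt n) (Γ : SSeq n) : Prop :=
  (∃ i w u, (i, w, u) ∈ RA ∧ (v = w ∨ v = u)) ∨ (∃ i, (i, v) ∈ IA) ∨ ∃ φ, (v, φ) ∈ Γ

/-- Undirected `i`-paths: `IPath RA i w u` holds iff `w = u` or there is a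
sequence of atoms, each of the form `R_[i] v z` or `R_[i] z v`, linking `w`
to `u`. -/
inductive IPath {n : ℕ} (RA : RAt n) (i : Fin (n + 1)) : ℕ → ℕ → Prop
  | refl (w : ℕ) : IPath RA i w w
  | fwd {w u v : ℕ} : (i, w, u) ∈ RA → IPath RA i u v → IPath RA i w v
  | bwd {w u v : ℕ} : (i, u, w) ∈ RA → IPath RA i u v → IPath RA i w v

/-- The negation-normal-form negation `φ̄` of a deontic STIT formula. -/
def SFml.negnnf {n : ℕ} : SFml n → SFml n
  | SFml.pos p => SFml.neg p
  | SFml.neg p => SFml.pos p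
  | SFml.or φ ψ => SFml.and φ.negnnf ψ.negnnf
  | SFml.and φ ψ => SFml.or φ.negnnf ψ.negnnf
  | SFml.box φ => SFml.dia φ.negnnf
  | SFml.dia φ => SFml.box φ.negnnf
  | SFml.abox i φ => SFml.adia i φ.negnnf
  | SFml.adia i φ => SFml.abox i φ.negnnf
  | SFml.obl i φ => SFml.per i φ.negnnf
  | SFml.per i φ => SFml.obl i φ.negnnf

/-- Substitution of the label `w` for the label `u`. -/
def substLbl (w u v : ℕ) : ℕ := if v = u then w else v

/-- Label substitution on relational atoms. -/
def substRAt {n : ℕ} (w u : ℕ) (RA : RAt n) : RAt n :=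
  RA.map fun t => (t.1, substLbl w u t.2.1, substLbl w u t.2.2)

/-- Label substitution on deontic atoms. -/
def substDAt {n : ℕ} (w u : ℕ) (IA : DAt n) : DAt n :=
  IA.map fun t => (t.1, substLbl w u t.2)

/-- Label substitution on labelled formulae. -/
def substSSeq {n : ℕ} (w u : ℕ) (Γ : SSeq n) : SSeq n :=
  Γ.map fun t => (substLbl w u t.1, t.2)

/-- Gated labelled sequent calculi for deontic STIT logics.  The rules `(id)`,
`(∨r)`, `(∧r)`, `(◇)`, `(□)`, `([i])`, `(⊗_i)`, `(IOA)` and (for `k > 0`)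
`(APC_i^k)` are always present; the propagation rules `(Pr_⟨i⟩)`, `(Pr_⊖i¹)`,
`(Pr_⊖i²)` are present exactly when the gate `gR` holds; the rules `(⟨i⟩)`,
`(⊖_i)` and the structural rules `(ref_i)`, `(euc_i)`, `(D2^i)`, `(D3^i)` are
present exactly when the gate `gG` holds; and the rules of `Str(DS)` (label
substitution, weakening, contractions, cut) are present exactly when the gate
`gS` holds.  In particular `SDer n k False True False` is `G3DS_n^k`,
`SDer n k True False False` is `DS_n^k L`, and `SDer n k True False True` is
`DS_n^k L + Str(DS)`. -/
inductive SDer (n k : ℕ) (gR gG gS : Prop) : RAt n → DAt n → SSeq n → Prop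
  | id (RA : RAt n) (IA : DAt n) (Γ : SSeq n) (w p : ℕ) :
      SDer n k gR gG gS RA IA ((w, SFml.pos p) ::ₘ (w, SFml.neg p) ::ₘ Γ)
  | orr {RA : RAt n} {IA : DAt n} {Γ : SSeq n} {w : ℕ} {φ ψ : SFml n} :
      SDer n k gR gG gS RA IA ((w, φ) ::ₘ (w, ψ) ::ₘ Γ) →
      SDer n k gR gG gS RA IA ((w, SFml.or φ ψ) ::ₘ Γ)
  | andr {RA : RAt n} {IA : DAt n} {Γ : SSeq n} {w : ℕ} {φ ψ : SFml n} :
      SDer n k gR gG gS RA IA ((w, φ) ::ₘ Γ) →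
      SDer n k gR gG gS RA IA ((w, ψ) ::ₘ Γ) →
      SDer n k gR gG gS RA IA ((w, SFml.and φ ψ) ::ₘ Γ)
  | diar {RA : RAt n} {IA : DAt n} {Γ : SSeq n} {w u : ℕ} {φ : SFml n} :
      SDer n k gR gG gS RA IA ((w, SFml.dia φ) ::ₘ (u, φ) ::ₘ Γ) →
      SDer n k gR gG gS RA IA ((w, SFml.dia φ) ::ₘ Γ)
  | boxr {RA : RAt n} {IA : DAt n} {Γ : SSeq n} {w u : ℕ} {φ : SFml n} :
      ¬ soccurs u RA IA ((w, SFml.box φ) ::ₘ Γ) →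
      SDer n k gR gG gS RA IA ((u, φ) ::ₘ Γ) →
      SDer n k gR gG gS RA IA ((w, SFml.box φ) ::ₘ Γ)
  | aboxr {RA : RAt n} {IA : DAt n} {Γ : SSeq n} {w u : ℕ} {i : Fin (n + 1)}
      {φ : SFml n} :
      ¬ soccurs u RA IA ((w, SFml.abox i φ) ::ₘ Γ) →
      SDer n k gR gG gS ((i, w, u) ::ₘ RA) IA ((u, φ) ::ₘ Γ) →
      SDer n k gR gG gS RA IA ((w, SFml.abox i φ) ::ₘ Γ)
  | oblr {RA : RAt n} {IA : DAt n} {Γ : SSeq n} {w u : ℕ} {i : Fin (n + 1)}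
      {φ : SFml n} :
      ¬ soccurs u RA IA ((w, SFml.obl i φ) ::ₘ Γ) →
      SDer n k gR gG gS RA ((i, u) ::ₘ IA) ((u, φ) ::ₘ Γ) →
      SDer n k gR gG gS RA IA ((w, SFml.obl i φ) ::ₘ Γ)
  | ioa {RA : RAt n} {IA : DAt n} {Γ : SSeq n} (ws : Fin (n + 1) → ℕ) (u : ℕ) :
      ¬ soccurs u RA IA Γ →
      SDer n k gR gG gS ((Finset.univ.val.map fun i => (i, ws i, u)) + RA) IA Γ →
      SDer n k gR gG gS RA IA Γ
  | apc {RA : RAt n} {IA : DAt n} {Γ : SSeq n} (hk : 0 < k) (i : Fin (n + 1))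
      (ws : Fin (k + 1) → ℕ) :
      (∀ m j : Fin (k + 1), (m : ℕ) < (j : ℕ) →
        SDer n k gR gG gS ((i, ws m, ws j) ::ₘ RA) IA Γ) →
      SDer n k gR gG gS RA IA Γ
  | prAdia {RA : RAt n} {IA : DAt n} {Γ : SSeq n} {u v : ℕ} {i : Fin (n + 1)}
      {φ : SFml n} :
      gR → IPath RA i u v →
      SDer n k gR gG gS RA IA ((u, SFml.adia i φ) ::ₘ (v, φ) ::ₘ Γ) →
      SDer n k gR gG gS RA IA ((u, SFml.adia i φ) ::ₘ Γ)
  | prPer1 {RA : RAt n} {IA : DAt n} {Γ : SSeq n} {w u v : ℕ} {i : Fin (n + 1)}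
      {φ : SFml n} :
      gR → IPath RA i u v →
      SDer n k gR gG gS RA ((i, u) ::ₘ IA) ((w, SFml.per i φ) ::ₘ (v, φ) ::ₘ Γ) →
      SDer n k gR gG gS RA ((i, u) ::ₘ IA) ((w, SFml.per i φ) ::ₘ Γ)
  | prPer2 {RA : RAt n} {IA : DAt n} {Γ : SSeq n} {w u : ℕ} {i : Fin (n + 1)}
      {φ : SFml n} :
      gR → ¬ soccurs u RA IA ((w, SFml.per i φ) ::ₘ Γ) →
      SDer n k gR gG gS RA ((i, u) ::ₘ IA) ((w, SFml.per i φ) ::ₘ (u, φ) ::ₘ Γ) →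
      SDer n k gR gG gS RA IA ((w, SFml.per i φ) ::ₘ Γ)
  | adiar {RA : RAt n} {IA : DAt n} {Γ : SSeq n} {w u : ℕ} {i : Fin (n + 1)}
      {φ : SFml n} :
      gG →
      SDer n k gR gG gS ((i, w, u) ::ₘ RA) IA
        ((w, SFml.adia i φ) ::ₘ (u, φ) ::ₘ Γ) →
      SDer n k gR gG gS ((i, w, u) ::ₘ RA) IA ((w, SFml.adia i φ) ::ₘ Γ)
  | operr {RA : RAt n} {IA : DAt n} {Γ : SSeq n} {w u : ℕ} {i : Fin (n + 1)}
      {φ : SFml n} :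
      gG →
      SDer n k gR gG gS RA ((i, u) ::ₘ IA) ((w, SFml.per i φ) ::ₘ (u, φ) ::ₘ Γ) →
      SDer n k gR gG gS RA ((i, u) ::ₘ IA) ((w, SFml.per i φ) ::ₘ Γ)
  | refl {RA : RAt n} {IA : DAt n} {Γ : SSeq n} {w : ℕ} {i : Fin (n + 1)} :
      gG → SDer n k gR gG gS ((i, w, w) ::ₘ RA) IA Γ →
      SDer n k gR gG gS RA IA Γ
  | euc {RA : RAt n} {IA : DAt n} {Γ : SSeq n} {w u v : ℕ} {i : Fin (n + 1)} :
      gG →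
      SDer n k gR gG gS ((i, w, u) ::ₘ (i, w, v) ::ₘ (i, u, v) ::ₘ RA) IA Γ →
      SDer n k gR gG gS ((i, w, u) ::ₘ (i, w, v) ::ₘ RA) IA Γ
  | d2 {RA : RAt n} {IA : DAt n} {Γ : SSeq n} {u : ℕ} {i : Fin (n + 1)} :
      gG → ¬ soccurs u RA IA Γ →
      SDer n k gR gG gS RA ((i, u) ::ₘ IA) Γ →
      SDer n k gR gG gS RA IA Γ
  | d3 {RA : RAt n} {IA : DAt n} {Γ : SSeq n} {w u : ℕ} {i : Fin (n + 1)} :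
      gG →
      SDer n k gR gG gS ((i, w, u) ::ₘ RA) ((i, w) ::ₘ (i, u) ::ₘ IA) Γ →
      SDer n k gR gG gS ((i, w, u) ::ₘ RA) ((i, w) ::ₘ IA) Γ
  | subst {RA : RAt n} {IA : DAt n} {Γ : SSeq n} (w u : ℕ) :
      gS → SDer n k gR gG gS RA IA Γ →
      SDer n k gR gG gS (substRAt w u RA) (substDAt w u IA) (substSSeq w u Γ)
  | wk {RA RA' : RAt n} {IA IA' : DAt n} {Γ Γ' : SSeq n} :
      gS → SDer n k gR gG gS RA IA Γ →
      SDer n k gR gG gS (RA + RA') (IA + IA') (Γ + Γ')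
  | ctrR {RA : RAt n} {IA : DAt n} {Γ : SSeq n} (a : Fin (n + 1) × ℕ × ℕ) :
      gS → SDer n k gR gG gS (a ::ₘ a ::ₘ RA) IA Γ →
      SDer n k gR gG gS (a ::ₘ RA) IA Γ
  | ctrI {RA : RAt n} {IA : DAt n} {Γ : SSeq n} (b : Fin (n + 1) × ℕ) :
      gS → SDer n k gR gG gS RA (b ::ₘ b ::ₘ IA) Γ →
      SDer n k gR gG gS RA (b ::ₘ IA) Γ
  | ctrF {RA : RAt n} {IA : DAt n} {Γ : SSeq n} (w : ℕ) (φ : SFml n) :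
      gS → SDer n k gR gG gS RA IA ((w, φ) ::ₘ (w, φ) ::ₘ Γ) →
      SDer n k gR gG gS RA IA ((w, φ) ::ₘ Γ)
  | cut {RA : RAt n} {IA : DAt n} {Γ : SSeq n} (w : ℕ) (φ : SFml n) :
      gS → SDer n k gR gG gS RA IA ((w, φ) ::ₘ Γ) →
      SDer n k gR gG gS RA IA ((w, SFml.negnnf φ) ::ₘ Γ) →
      SDer n k gR gG gS RA IA Γ

/-- The labelled calculus `G3DS_n^k`. -/
abbrev G3DS (n k : ℕ) : RAt n → DAt n → SSeq n → Prop := SDer n k False True False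

/-- The refined labelled calculus `DS_n^k L`. -/
abbrev DSL (n k : ℕ) : RAt n → DAt n → SSeq n → Prop := SDer n k True False False

/-- The calculus `DS_n^k L + Str(DS)`. -/
abbrev DSLStr (n k : ℕ) : RAt n → DAt n → SSeq n → Prop := SDer n k True False True

/-!
Weaken the hypothesis on the atom to be deleted until it is stable under all rules: replace `RA` by
any `RA'` in which every atom of `RA` is still an undirected path and which has no new labels. The
first condition survives `(ref_i)` and `(euc_i)` because undirected paths form an equivalence
relation. The second keeps eigenvariables fresh, so no label has to be renamed. Where a rule
inspects an atom of `RA` that is only a path in `RA'`, backward applications of `(ref_i)` and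
`(euc_i)` turn the path back into an atom.
-/

section

variable {n k : ℕ} {gR gG gS : Prop} {RA RA' : RAt n} {IA : DAt n} {Γ : SSeq n}
  {i : Fin (n + 1)} {w u v : ℕ}

namespace IPath

theorem single (h : (i, w, u) ∈ RA) : IPath RA i w u :=
  .fwd h (.refl u)

theorem trans (h : IPath RA i w u) (h' : IPath RA i u v) : IPath RA i w v := by
  induction h with
  | refl => exact h'
  | fwd hm _ ih => exact .fwd hm (ih h')
  | bwd hm _ ih => exact .bwd hm (ih h')

theorem symm (h : IPath RA i w u) : IPath RA i u w := by
  induction h with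
  | refl w => exact .refl w
  | fwd hm _ ih => exact ih.trans (.bwd hm (.refl _))
  | bwd hm _ ih => exact ih.trans (.single hm)

theorem lift (hR : ∀ {w u}, (i, w, u) ∈ RA → IPath RA' i w u) (h : IPath RA i w u) :
    IPath RA' i w u := by
  induction h with
  | refl w => exact .refl w
  | fwd hm _ ih => exact (hR hm).trans ih
  | bwd hm _ ih => exact (hR hm).symm.trans ih

theorem mono (hR : RA ⊆ RA') (h : IPath RA i w u) : IPath RA' i w u :=
  h.lift fun hm => .single (hR hm)

end IPath

/-- The set of labels occurring in the relational atoms `RA`, i.e. the part of `soccurs`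
contributed by `RA`. -/
def relLabels (RA : RAt n) : Set ℕ :=
  {v | ∃ i w u, (i, w, u) ∈ RA ∧ (v = w ∨ v = u)}

theorem left_mem_relLabels (h : (i, w, u) ∈ RA) : w ∈ relLabels RA :=
  ⟨i, w, u, h, .inl rfl⟩

theorem right_mem_relLabels (h : (i, w, u) ∈ RA) : u ∈ relLabels RA :=
  ⟨i, w, u, h, .inr rfl⟩

theorem relLabels_mono (h : RA ⊆ RA') : relLabels RA ⊆ relLabels RA' :=
  fun _ ⟨i, w, u, hm, hv⟩ => ⟨i, w, u, h hm, hv⟩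

theorem relLabels_add (RA RA' : RAt n) :
    relLabels (RA + RA') = relLabels RA ∪ relLabels RA' := by
  ext v
  simp only [relLabels, Multiset.mem_add, Set.mem_union, Set.mem_ofPred_eq, or_and_right,
    exists_or]

theorem relLabels_cons (i : Fin (n + 1)) (w u : ℕ) (RA : RAt n) :
    relLabels ((i, w, u) ::ₘ RA) = insert w (insert u (relLabels RA)) := by
  apply Set.Subset.antisymm
  · rintro v ⟨j, a, b, hm, hv⟩
    obtain heq | hm := Multiset.mem_cons.1 hm
    · cases heq
      exact hv.imp_right .inl
    · exact .inr (.inr ⟨j, a, b, hm, hv⟩)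
  · have hmem : (i, w, u) ∈ (i, w, u) ::ₘ RA := Multiset.mem_cons_self _ _
    exact Set.insert_subset (left_mem_relLabels hmem) (Set.insert_subset
      (right_mem_relLabels hmem) (relLabels_mono (Multiset.subset_cons _ _)))

namespace SDer

theorem of_euc_mem (hG : gG) (hu : (i, w, u) ∈ RA) (hv : (i, w, v) ∈ RA)
    (hd : SDer n k gR gG gS ((i, u, v) ::ₘ RA) IA Γ) : SDer n k gR gG gS RA IA Γ := by
  -- `(euc_i)` needs two copies of `R_[i]wu` if `u = v`; `(ref_i)` replaces it in that case.
  obtain rfl | huv := eq_or_ne u v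
  · exact .refl hG hd
  obtain ⟨R, rfl⟩ := Multiset.exists_cons_of_mem hu
  have hvR : (i, w, v) ∈ R := by simpa [huv.symm] using hv
  obtain ⟨S, rfl⟩ := Multiset.exists_cons_of_mem hvR
  apply SDer.euc hG
  rwa [Multiset.cons_swap (i, w, v), Multiset.cons_swap (i, w, u)]

theorem of_symm_mem (hG : gG) (h : (i, w, u) ∈ RA)
    (hd : SDer n k gR gG gS ((i, u, w) ::ₘ (i, w, w) ::ₘ RA) IA Γ) :
    SDer n k gR gG gS RA IA Γ :=
  .refl hG (.of_euc_mem hG (Multiset.mem_cons_of_mem h) (Multiset.mem_cons_self _ _) hd)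

end SDer

theorem IPath.exists_extension (k : ℕ) (gR gS : Prop) (hG : gG) (hp : IPath RA i w u) :
    ∃ RA', RA ⊆ RA' ∧ (i, w, u) ∈ RA' ∧ relLabels RA' ⊆ insert w (relLabels RA) ∧
      ∀ {IA Γ}, SDer n k gR gG gS RA' IA Γ → SDer n k gR gG gS RA IA Γ := by
  induction hp with
  | refl w =>
    refine ⟨(i, w, w) ::ₘ RA, Multiset.subset_cons _ _, Multiset.mem_cons_self _ _, ?_,
      .refl hG⟩
    rw [relLabels_cons, Set.insert_idem]
  | @fwd w u v hwu _ ih =>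
    obtain ⟨R, hR, huv, hl, hder⟩ := ih
    rw [Set.insert_eq_of_mem (right_mem_relLabels hwu)] at hl
    refine ⟨(i, w, v) ::ₘ (i, u, w) ::ₘ (i, w, w) ::ₘ R, fun a ha => ?_,
      Multiset.mem_cons_self _ _, ?_, fun hd => ?_⟩
    · simp only [Multiset.mem_cons, hR ha, or_true]
    · simp only [relLabels_cons, Set.insert_subset_iff, Set.mem_insert_iff, true_or,
        right_mem_relLabels hwu, hl (right_mem_relLabels huv), or_true, true_and]
      exact hl.trans (Set.subset_insert _ _)
    · refine hder (.of_symm_mem hG (hR hwu) (.of_euc_mem hG (w := u) ?_ ?_ hd))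
      · exact Multiset.mem_cons_self _ _
      · simp only [Multiset.mem_cons, huv, or_true]
  | @bwd w u v huw _ ih =>
    obtain ⟨R, hR, huv, hl, hder⟩ := ih
    rw [Set.insert_eq_of_mem (left_mem_relLabels huw)] at hl
    refine ⟨(i, w, v) ::ₘ R, fun a ha => Multiset.mem_cons_of_mem (hR ha),
      Multiset.mem_cons_self _ _, ?_, fun hd => hder (.of_euc_mem hG (hR huw) huv hd)⟩
    rw [relLabels_cons, Set.insert_eq_of_mem (right_mem_relLabels huv)]
    exact Set.insert_subset_insert hl

/-- `RA'` spans `RA`: every atom `R_[i]wu` of `RA` is an undirected `i`-path of `RA'`, and every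
label of `RA'` occurs in `RA`. This is the invariant under which `RA'` may replace `RA` in a
derivable sequent; the condition on labels is what preserves the freshness of eigenvariables. -/
structure Spans (RA' RA : RAt n) : Prop where
  iPath_of_mem {i : Fin (n + 1)} {w u : ℕ} : (i, w, u) ∈ RA → IPath RA' i w u
  relLabels_subset : relLabels RA' ⊆ relLabels RA

namespace Spans

theorem refl (RA : RAt n) : Spans RA RA :=
  ⟨.single, subset_rfl⟩

theorem iPath (h : Spans RA' RA) (hp : IPath RA i w u) : IPath RA' i w u :=
  hp.lift h.iPath_of_mem

theorem add_left (h : Spans RA' RA) (S : RAt n) : Spans (S + RA') (S + RA) where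
  iPath_of_mem hm := by
    obtain hm | hm := Multiset.mem_add.1 hm
    · exact .single (Multiset.mem_add.2 (.inl hm))
    · exact (h.iPath_of_mem hm).mono (Multiset.subset_of_le (Multiset.le_add_left _ _))
  relLabels_subset := by
    simpa only [relLabels_add] using Set.union_subset_union_right _ h.relLabels_subset

theorem cons (h : Spans RA' RA) : Spans ((i, w, u) ::ₘ RA') ((i, w, u) ::ₘ RA) := by
  simpa only [Multiset.singleton_add] using h.add_left {(i, w, u)}

theorem cons_right (h : Spans RA' RA) (hp : IPath RA' i w u) :
    Spans RA' ((i, w, u) ::ₘ RA) where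
  iPath_of_mem hm := by
    obtain heq | hm := Multiset.mem_cons.1 hm
    · cases heq
      exact hp
    · exact h.iPath_of_mem hm
  relLabels_subset := h.relLabels_subset.trans (relLabels_mono (Multiset.subset_cons _ _))

theorem not_soccurs (h : Spans RA' RA) (hv : ¬ soccurs v RA IA Γ) : ¬ soccurs v RA' IA Γ :=
  mt (Or.imp_left fun hm => h.relLabels_subset hm) hv

theorem exists_cons (k : ℕ) (gR gS : Prop) (hG : gG) (h : Spans RA' ((i, w, u) ::ₘ RA)) :
    ∃ S, Spans ((i, w, u) ::ₘ S) ((i, w, u) ::ₘ RA) ∧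
      ∀ {IA Γ}, SDer n k gR gG gS ((i, w, u) ::ₘ S) IA Γ → SDer n k gR gG gS RA' IA Γ := by
  have hmem : (i, w, u) ∈ (i, w, u) ::ₘ RA := Multiset.mem_cons_self _ _
  obtain ⟨R, hR, hm, hl, hder⟩ := (h.iPath_of_mem hmem).exists_extension k gR gS hG
  obtain ⟨S, rfl⟩ := Multiset.exists_cons_of_mem hm
  refine ⟨S, ⟨fun ha => (h.iPath_of_mem ha).mono hR, hl.trans ?_⟩, hder⟩
  exact Set.insert_subset (left_mem_relLabels hmem) h.relLabels_subset

end Spans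

theorem SDer.of_spans (hd : SDer n k gR gG False RA IA Γ) (hs : Spans RA' RA) :
    SDer n k gR gG False RA' IA Γ := by
  induction hd generalizing RA' with
  | id => exact .id ..
  | orr _ ih => exact .orr (ih hs)
  | andr _ _ ih₁ ih₂ => exact .andr (ih₁ hs) (ih₂ hs)
  | diar _ ih => exact .diar (ih hs)
  | boxr hu _ ih => exact .boxr (hs.not_soccurs hu) (ih hs)
  | aboxr hu _ ih => exact .aboxr (hs.not_soccurs hu) (ih hs.cons)
  | oblr hu _ ih => exact .oblr (hs.not_soccurs hu) (ih hs)
  | ioa ws u hu _ ih => exact .ioa ws u (hs.not_soccurs hu) (ih (hs.add_left _))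
  | apc hk i ws _ ih => exact .apc hk i ws fun m j hmj => ih m j hmj hs.cons
  | prAdia hR hp _ ih => exact .prAdia hR (hs.iPath hp) (ih hs)
  | prPer1 hR hp _ ih => exact .prPer1 hR (hs.iPath hp) (ih hs)
  | prPer2 hR hu _ ih => exact .prPer2 hR (hs.not_soccurs hu) (ih hs)
  | adiar hG _ ih =>
    obtain ⟨S, hS, hder⟩ := hs.exists_cons k gR False hG
    exact hder (.adiar hG (ih hS))
  | operr hG _ ih => exact .operr hG (ih hs)
  | refl _ _ ih => exact ih (hs.cons_right (.refl _))
  | @euc R _ _ w u v i _ _ ih =>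
    have hwu : IPath RA' i w u := hs.iPath_of_mem (Multiset.mem_cons_self _ _)
    have hwv : IPath RA' i w v :=
      hs.iPath_of_mem (Multiset.mem_cons_of_mem (Multiset.mem_cons_self _ _))
    apply ih
    rw [Multiset.cons_swap (i, w, v), Multiset.cons_swap (i, w, u)]
    exact hs.cons_right (hwu.symm.trans hwv)
  | d2 hG hu _ ih => exact .d2 hG (hs.not_soccurs hu) (ih hs)
  | d3 hG _ ih =>
    obtain ⟨S, hS, hder⟩ := hs.exists_cons k gR False hG
    exact hder (.d3 hG (ih hS))
  | subst _ _ hS => exact hS.elim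
  | wk hS => exact hS.elim
  | ctrR _ hS => exact hS.elim
  | ctrI _ hS => exact hS.elim
  | ctrF _ _ hS => exact hS.elim
  | cut _ _ hS => exact hS.elim

theorem delete_relational_atom_general
    (hd : SDer n k gR gG False ((i, w, u) ::ₘ RA) IA Γ) (hp : IPath RA i w u) :
    SDer n k gR gG False RA IA Γ :=
  hd.of_spans ((Spans.refl RA).cons_right hp)

end

/-- For all `n, k ∈ ℕ`: if `R, R_[i] wu ⊢ Γ` is derivable in
`G3DS_n^k` and there is an undirected `i`-path from `w` to `u` in `R`, then
`R ⊢ Γ` is derivable in `G3DS_n^k`. -/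
theorem delete_relational_atom (n k : ℕ) (RA : RAt n) (IA : DAt n) (Γ : SSeq n)
    (i : Fin (n + 1)) (w u : ℕ)
    (hd : G3DS n k ((i, w, u) ::ₘ RA) IA Γ) (hp : IPath RA i w u) :
    G3DS n k RA IA Γ :=
  delete_relational_atom_general hd hp

end DeonticStit
end

section
/- For all n, k ∈ ℕ, every labelled sequent derivable in DS_n^k L + Str(DS) (i.e. DS_n^k L extended with label substitution, weakening, contraction of relational and deontic atoms, contraction of labelled formulae, and cut) is derivable in G3DS_n^k. -/
/-!
Labelled sequent calculi for deontic STIT logics `DS_n^k`.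
-/

namespace DeonticStit

/-!
The calculi are compared through their common relational semantics. Every rule, structural rules and
cut included, preserves validity in each `DS_n^k`-model. Conversely, an underivable sequent of
`G3DS_n^k` can be extended, by reading the rules from conclusion to premise, so as to meet any one
requirement of a Hintikka branch. There are countably many requirements, so a generic ideal of
underivable sequents (Rasiowa–Sikorski) meets them all, and its union is a Hintikka branch that
reads as a countermodel on the labels.
-/

/-! ### Semantics and soundness -/

/-- `DS_n^k`-models with worlds in `W`: `rel i` is the choice equivalence of agent `i`, `ideal i`
her set of deontically optimal worlds, and `□` is the universal modality. The fields `ioa`, `apc`,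
`exists_ideal` and `ideal_of_rel` are independence of agents, the bound `k` on the number of choices
(void for `k = 0`) and the conditions (D2) and (D3). -/
structure Model (n k : ℕ) (W : Type*) where
  rel : Fin (n + 1) → W → W → Prop
  ideal : Fin (n + 1) → W → Prop
  val : ℕ → W → Prop
  rel_refl : ∀ i w, rel i w w
  rel_eucl : ∀ {i w u v}, rel i w u → rel i w v → rel i u v
  ioa : ∀ ws : Fin (n + 1) → W, ∃ u, ∀ i, rel i (ws i) u
  apc : 0 < k → ∀ i (ws : Fin (k + 1) → W), ∃ m j, m < j ∧ rel i (ws m) (ws j)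
  exists_ideal : ∀ i, ∃ u, ideal i u
  ideal_of_rel : ∀ {i w u}, rel i w u → ideal i w → ideal i u

namespace Model

variable {n k : ℕ} {W : Type*} {M : Model n k W}

theorem rel_symm {i : Fin (n + 1)} {w u : W} (h : M.rel i w u) : M.rel i u w :=
  M.rel_eucl h (M.rel_refl i w)

theorem rel_trans {i : Fin (n + 1)} {w u v : W} (hwu : M.rel i w u) (huv : M.rel i u v) :
    M.rel i w v :=
  M.rel_eucl (rel_symm hwu) huv

/-- Satisfaction of a formula at a world. -/
def Sat (M : Model n k W) : W → SFml n → Prop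
  | w, .pos p => M.val p w
  | w, .neg p => ¬ M.val p w
  | w, .or φ ψ => M.Sat w φ ∨ M.Sat w ψ
  | w, .and φ ψ => M.Sat w φ ∧ M.Sat w ψ
  | _, .box φ => ∀ u, M.Sat u φ
  | _, .dia φ => ∃ u, M.Sat u φ
  | w, .abox i φ => ∀ u, M.rel i w u → M.Sat u φ
  | w, .adia i φ => ∃ u, M.rel i w u ∧ M.Sat u φ
  | _, .obl i φ => ∀ u, M.ideal i u → M.Sat u φ
  | _, .per i φ => ∃ u, M.ideal i u ∧ M.Sat u φ

theorem sat_negnnf {w : W} {φ : SFml n} : M.Sat w φ.negnnf ↔ ¬ M.Sat w φ := by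
  induction φ generalizing w <;> simp_all [Sat, SFml.negnnf, imp_iff_not_or]

/-- The assignment `σ` of worlds to labels refutes a labelled sequent: it satisfies all its
atoms and falsifies all its formulae. -/
structure Refutes (M : Model n k W) (σ : ℕ → W) (RA : RAt n) (IA : DAt n) (Γ : SSeq n) :
    Prop where
  rel : ∀ i w u, (i, w, u) ∈ RA → M.rel i (σ w) (σ u)
  ideal : ∀ i u, (i, u) ∈ IA → M.ideal i (σ u)
  fml : ∀ w φ, (w, φ) ∈ Γ → ¬ M.Sat (σ w) φ

/-- Validity of a labelled sequent in a model. -/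
def Valid (M : Model n k W) (RA : RAt n) (IA : DAt n) (Γ : SSeq n) : Prop :=
  ∀ σ, ¬ M.Refutes σ RA IA Γ

variable {σ : ℕ → W} {RA RA' : RAt n} {IA IA' : DAt n} {Γ Γ' : SSeq n}
  {i : Fin (n + 1)} {w u v : ℕ} {φ ψ : SFml n}

@[simp]
theorem refutes_cons_rel :
    M.Refutes σ ((i, w, u) ::ₘ RA) IA Γ ↔ M.rel i (σ w) (σ u) ∧ M.Refutes σ RA IA Γ where
  mp h := ⟨h.rel _ _ _ (by simp), fun _ _ _ m => h.rel _ _ _ (by simp [m]), h.ideal, h.fml⟩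
  mpr h := by
    refine ⟨fun j x y m => ?_, h.2.ideal, h.2.fml⟩
    rcases Multiset.mem_cons.1 m with m | m
    · cases m; exact h.1
    · exact h.2.rel j x y m

@[simp]
theorem refutes_cons_ideal :
    M.Refutes σ RA ((i, u) ::ₘ IA) Γ ↔ M.ideal i (σ u) ∧ M.Refutes σ RA IA Γ where
  mp h := ⟨h.ideal _ _ (by simp), h.rel, fun _ _ m => h.ideal _ _ (by simp [m]), h.fml⟩
  mpr h := by
    refine ⟨h.2.rel, fun j x m => ?_, h.2.fml⟩
    rcases Multiset.mem_cons.1 m with m | m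
    · cases m; exact h.1
    · exact h.2.ideal j x m

@[simp]
theorem refutes_cons_fml :
    M.Refutes σ RA IA ((w, φ) ::ₘ Γ) ↔ ¬ M.Sat (σ w) φ ∧ M.Refutes σ RA IA Γ where
  mp h := ⟨h.fml _ _ (by simp), h.rel, h.ideal, fun _ _ m => h.fml _ _ (by simp [m])⟩
  mpr h := by
    refine ⟨h.2.rel, h.2.ideal, fun x χ m => ?_⟩
    rcases Multiset.mem_cons.1 m with m | m
    · cases m; exact h.1
    · exact h.2.fml x χ m

theorem Refutes.rel_of_iPath (h : M.Refutes σ RA IA Γ) (p : IPath RA i w u) :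
    M.rel i (σ w) (σ u) := by
  induction p with
  | refl w => exact M.rel_refl _ _
  | fwd hR _ ih => exact rel_trans (h.rel _ _ _ hR) ih
  | bwd hR _ ih => exact rel_trans (rel_symm (h.rel _ _ _ hR)) ih

theorem Refutes.update_of_not_soccurs (h : M.Refutes σ RA IA Γ) (hu : ¬ soccurs u RA IA Γ)
    (x : W) : M.Refutes (Function.update σ u x) RA IA Γ := by
  have eq_of_soccurs (v : ℕ) (hv : soccurs v RA IA Γ) : Function.update σ u x v = σ v :=
    Function.update_of_ne (ne_of_mem_of_not_mem (s := {v | soccurs v RA IA Γ}) hv hu) x σ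
  refine ⟨fun i w v m => ?_, fun i v m => ?_, fun v φ m => ?_⟩
  · rw [eq_of_soccurs w (.inl ⟨i, w, v, m, .inl rfl⟩),
      eq_of_soccurs v (.inl ⟨i, w, v, m, .inr rfl⟩)]
    exact h.rel i w v m
  · rw [eq_of_soccurs v (.inr (.inl ⟨i, m⟩))]
    exact h.ideal i v m
  · rw [eq_of_soccurs v (.inr (.inr ⟨φ, m⟩))]
    exact h.fml v φ m

theorem Valid.mono (h : M.Valid RA IA Γ) (hR : RA ⊆ RA') (hI : IA ⊆ IA') (hΓ : Γ ⊆ Γ') :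
    M.Valid RA' IA' Γ' := fun σ hσ =>
  h σ ⟨fun i w u m => hσ.rel i w u (hR m), fun i u m => hσ.ideal i u (hI m),
    fun w φ m => hσ.fml w φ (hΓ m)⟩

theorem Valid.subst (h : M.Valid RA IA Γ) (w u : ℕ) :
    M.Valid (substRAt w u RA) (substDAt w u IA) (substSSeq w u Γ) := fun σ hσ =>
  h (σ ∘ substLbl w u)
    ⟨fun i _ _ m => hσ.rel i _ _ (Multiset.mem_map_of_mem _ m),
      fun i _ m => hσ.ideal i _ (Multiset.mem_map_of_mem _ m),
      fun _ φ m => hσ.fml _ φ (Multiset.mem_map_of_mem _ m)⟩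

theorem Valid.cut (h : M.Valid RA IA ((w, φ) ::ₘ Γ)) (h' : M.Valid RA IA ((w, φ.negnnf) ::ₘ Γ)) :
    M.Valid RA IA Γ := fun σ hσ => by
  have hφ : M.Sat (σ w) φ := not_not.1 fun hφ => h σ (refutes_cons_fml.2 ⟨hφ, hσ⟩)
  exact h' σ (refutes_cons_fml.2 ⟨sat_negnnf.not.2 (not_not.2 hφ), hσ⟩)

theorem Valid.of_cons_rel (h : M.Valid ((i, w, u) ::ₘ RA) IA Γ)
    (hR : ∀ σ, M.Refutes σ RA IA Γ → M.rel i (σ w) (σ u)) : M.Valid RA IA Γ :=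
  fun σ hσ => h σ (refutes_cons_rel.2 ⟨hR σ hσ, hσ⟩)

theorem Valid.of_cons_ideal (h : M.Valid RA ((i, u) ::ₘ IA) Γ)
    (hI : ∀ σ, M.Refutes σ RA IA Γ → M.ideal i (σ u)) : M.Valid RA IA Γ :=
  fun σ hσ => h σ (refutes_cons_ideal.2 ⟨hI σ hσ, hσ⟩)

theorem valid_id (p : ℕ) : M.Valid RA IA ((w, .pos p) ::ₘ (w, .neg p) ::ₘ Γ) := fun σ hσ => by
  simp only [refutes_cons_fml, Sat] at hσ
  exact hσ.2.1 hσ.1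

theorem Valid.or (h : M.Valid RA IA ((w, φ) ::ₘ (w, ψ) ::ₘ Γ)) :
    M.Valid RA IA ((w, .or φ ψ) ::ₘ Γ) := fun σ hσ => by
  simp only [refutes_cons_fml, Sat, not_or] at hσ
  exact h σ (by simpa [and_assoc] using hσ)

theorem Valid.and (h : M.Valid RA IA ((w, φ) ::ₘ Γ)) (h' : M.Valid RA IA ((w, ψ) ::ₘ Γ)) :
    M.Valid RA IA ((w, .and φ ψ) ::ₘ Γ) := fun σ hσ => by
  simp only [refutes_cons_fml, Sat, not_and_or] at hσ
  exact hσ.1.elim (fun hφ => h σ (by simp [hφ, hσ.2])) (fun hψ => h' σ (by simp [hψ, hσ.2]))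

theorem Valid.dia (h : M.Valid RA IA ((w, .dia φ) ::ₘ (u, φ) ::ₘ Γ)) :
    M.Valid RA IA ((w, .dia φ) ::ₘ Γ) := fun σ hσ => h σ <| by
  simp only [refutes_cons_fml, Sat, not_exists] at hσ ⊢
  exact ⟨hσ.1, hσ.1 _, hσ.2⟩

theorem Valid.adia (h : M.Valid RA IA ((w, .adia i φ) ::ₘ (u, φ) ::ₘ Γ))
    (hR : ∀ σ, M.Refutes σ RA IA Γ → M.rel i (σ w) (σ u)) :
    M.Valid RA IA ((w, .adia i φ) ::ₘ Γ) := fun σ hσ => h σ <| by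
  simp only [refutes_cons_fml, Sat, not_exists, not_and] at hσ ⊢
  exact ⟨hσ.1, hσ.1 _ (hR σ hσ.2), hσ.2⟩

theorem Valid.per (h : M.Valid RA IA ((w, .per i φ) ::ₘ (u, φ) ::ₘ Γ))
    (hI : ∀ σ, M.Refutes σ RA IA Γ → M.ideal i (σ u)) :
    M.Valid RA IA ((w, .per i φ) ::ₘ Γ) := fun σ hσ => h σ <| by
  simp only [refutes_cons_fml, Sat, not_exists, not_and] at hσ ⊢
  exact ⟨hσ.1, hσ.1 _ (hI σ hσ.2), hσ.2⟩

theorem Valid.box (h : M.Valid RA IA ((u, φ) ::ₘ Γ))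
    (hu : ¬ soccurs u RA IA ((w, .box φ) ::ₘ Γ)) : M.Valid RA IA ((w, .box φ) ::ₘ Γ) :=
  fun σ hσ => by
  obtain ⟨x, hx⟩ : ∃ x, ¬ M.Sat x φ := by simpa [Sat] using (refutes_cons_fml.1 hσ).1
  have hΓ := (refutes_cons_fml.1 (hσ.update_of_not_soccurs hu x)).2
  exact h (Function.update σ u x) (by simpa [hx] using hΓ)

theorem Valid.abox (h : M.Valid ((i, w, u) ::ₘ RA) IA ((u, φ) ::ₘ Γ))
    (hu : ¬ soccurs u RA IA ((w, .abox i φ) ::ₘ Γ)) : M.Valid RA IA ((w, .abox i φ) ::ₘ Γ) :=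
  fun σ hσ => by
  obtain ⟨x, hR, hx⟩ : ∃ x, M.rel i (σ w) x ∧ ¬ M.Sat x φ := by
    simpa [Sat] using (refutes_cons_fml.1 hσ).1
  have hwu : w ≠ u := fun hwu => hu (.inr (.inr ⟨.abox i φ, by simp [hwu]⟩))
  have hΓ := (refutes_cons_fml.1 (hσ.update_of_not_soccurs hu x)).2
  exact h (Function.update σ u x) (by simpa [hx, hR, hwu] using hΓ)

theorem Valid.obl (h : M.Valid RA ((i, u) ::ₘ IA) ((u, φ) ::ₘ Γ))
    (hu : ¬ soccurs u RA IA ((w, .obl i φ) ::ₘ Γ)) : M.Valid RA IA ((w, .obl i φ) ::ₘ Γ) :=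
  fun σ hσ => by
  obtain ⟨x, hI, hx⟩ : ∃ x, M.ideal i x ∧ ¬ M.Sat x φ := by
    simpa [Sat] using (refutes_cons_fml.1 hσ).1
  have hΓ := (refutes_cons_fml.1 (hσ.update_of_not_soccurs hu x)).2
  exact h (Function.update σ u x) (by simpa [hx, hI] using hΓ)

theorem Valid.ioa {ws : Fin (n + 1) → ℕ}
    (h : M.Valid ((Finset.univ.val.map fun i => (i, ws i, u)) + RA) IA Γ)
    (hu : ¬ soccurs u RA IA Γ) : M.Valid RA IA Γ := fun σ hσ => by
  obtain ⟨x, hx⟩ := M.ioa (σ ∘ ws)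
  have hτ := hσ.update_of_not_soccurs hu x
  have rel_x (i : Fin (n + 1)) : M.rel i (Function.update σ u x (ws i)) x := by
    by_cases hi : ws i = u
    · simpa [hi] using M.rel_refl i x
    · simpa [hi] using hx i
  refine h _ ⟨fun i w v m => ?_, hτ.ideal, hτ.fml⟩
  rcases Multiset.mem_add.1 m with m | m
  · obtain ⟨j, -, hj⟩ := Multiset.mem_map.1 m
    cases hj
    simpa using rel_x i
  · exact hτ.rel i w v m

theorem Valid.apc {ws : Fin (k + 1) → ℕ} (hk : 0 < k)
    (h : ∀ m j : Fin (k + 1), (m : ℕ) < j → M.Valid ((i, ws m, ws j) ::ₘ RA) IA Γ) :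
    M.Valid RA IA Γ := fun σ hσ => by
  obtain ⟨m, j, hmj, hR⟩ := M.apc hk i (σ ∘ ws)
  exact h m j hmj σ (refutes_cons_rel.2 ⟨hR, hσ⟩)

theorem Valid.d2 (h : M.Valid RA ((i, u) ::ₘ IA) Γ) (hu : ¬ soccurs u RA IA Γ) :
    M.Valid RA IA Γ := fun σ hσ => by
  obtain ⟨x, hx⟩ := M.exists_ideal i
  exact h (Function.update σ u x) (by simpa [hx] using hσ.update_of_not_soccurs hu x)

end Model

open Model in
theorem SDer.valid {n k : ℕ} {gR gG gS : Prop} {RA : RAt n} {IA : DAt n} {Γ : SSeq n}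
    (h : SDer n k gR gG gS RA IA Γ) {W : Type*} (M : Model n k W) : M.Valid RA IA Γ := by
  induction h with
  | id _ _ _ _ p => exact Model.valid_id p
  | orr _ ih => exact ih.or
  | andr _ _ ih ih' => exact ih.and ih'
  | diar _ ih => exact ih.dia
  | boxr hu _ ih => exact ih.box hu
  | aboxr hu _ ih => exact ih.abox hu
  | oblr hu _ ih => exact ih.obl hu
  | ioa _ _ hu _ ih => exact ih.ioa hu
  | apc hk _ _ _ ih => exact .apc hk ih
  | prAdia _ p _ ih => exact ih.adia fun _ hσ => hσ.rel_of_iPath p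
  | prPer1 _ p _ ih =>
    exact ih.per fun _ hσ => M.ideal_of_rel (hσ.rel_of_iPath p) (refutes_cons_ideal.1 hσ).1
  | prPer2 _ hu _ ih => exact (ih.per fun _ hσ => (refutes_cons_ideal.1 hσ).1).d2 hu
  | adiar _ _ ih => exact ih.adia fun _ hσ => (refutes_cons_rel.1 hσ).1
  | operr _ _ ih => exact ih.per fun _ hσ => (refutes_cons_ideal.1 hσ).1
  | refl _ _ ih => exact ih.of_cons_rel fun _ _ => M.rel_refl _ _
  | @euc RA _ _ w u v i _ _ ih =>
    have premise_eq : (i, w, u) ::ₘ (i, w, v) ::ₘ (i, u, v) ::ₘ RA =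
        (i, u, v) ::ₘ (i, w, u) ::ₘ (i, w, v) ::ₘ RA := by
      rw [Multiset.cons_swap (i, w, v), Multiset.cons_swap (i, w, u)]
    rw [premise_eq] at ih
    refine ih.of_cons_rel fun _ hσ => ?_
    simp only [refutes_cons_rel] at hσ
    exact M.rel_eucl hσ.1 hσ.2.1
  | d2 _ hu _ ih => exact ih.d2 hu
  | d3 _ _ ih =>
    rw [Multiset.cons_swap] at ih
    refine ih.of_cons_ideal fun _ hσ => ?_
    simp only [refutes_cons_rel, refutes_cons_ideal] at hσ
    exact M.ideal_of_rel hσ.2.1 hσ.1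
  | subst w u _ _ ih => exact ih.subst w u
  | wk _ _ ih =>
    exact ih.mono (Multiset.subset_add_left ..) (Multiset.subset_add_left ..)
      (Multiset.subset_add_left ..)
  | ctrR _ _ _ ih => exact ih.mono (by simp) (by simp) (by simp)
  | ctrI _ _ _ ih => exact ih.mono (by simp) (by simp) (by simp)
  | ctrF _ _ _ _ ih => exact ih.mono (by simp) (by simp) (by simp)
  | cut _ _ _ _ _ ih ih' => exact ih.cut ih'

/-! ### Hintikka branches -/

/-- The data read off a branch of a proof search: the accumulated relational atoms, deontic atoms
and labelled formulae, with labels in `W`. -/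
structure Branch (n : ℕ) (W : Type*) where
  rel : Fin (n + 1) → W → W → Prop
  ideal : Fin (n + 1) → W → Prop
  fml : W → SFml n → Prop

instance {n : ℕ} {W : Type*} : Preorder (Branch n W) :=
  Preorder.lift fun B => (B.rel, B.ideal, B.fml)

/-- Instances of the rules of `G3DS_n^k` other than `(id)`, each viewed as a closure requirement on
branches. -/
inductive Requirement (n k : ℕ) (W : Type*)
  | refl (i : Fin (n + 1)) (w : W)
  | eucl (i : Fin (n + 1)) (w u v : W)
  | ioa (ws : Fin (n + 1) → W)
  | apc (i : Fin (n + 1)) (ws : Fin (k + 1) → W)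
  | d2 (i : Fin (n + 1))
  | d3 (i : Fin (n + 1)) (w u : W)
  | or (w : W) (φ ψ : SFml n)
  | and (w : W) (φ ψ : SFml n)
  | box (w : W) (φ : SFml n)
  | dia (w u : W) (φ : SFml n)
  | abox (i : Fin (n + 1)) (w : W) (φ : SFml n)
  | adia (i : Fin (n + 1)) (w u : W) (φ : SFml n)
  | obl (i : Fin (n + 1)) (w : W) (φ : SFml n)
  | per (i : Fin (n + 1)) (w u : W) (φ : SFml n)

deriving instance Countable for SFml
deriving instance Countable for Requirement

namespace Requirement

variable {n k : ℕ} {W : Type*} {B B' : Branch n W}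

/-- The condition under which a requirement applies to a branch: the rule's principal atoms and
formulae have been accumulated. -/
def Premise (B : Branch n W) : Requirement n k W → Prop
  | refl _ _ | ioa _ | d2 _ => True
  | eucl i w u v => B.rel i w u ∧ B.rel i w v
  | apc _ _ => 0 < k
  | d3 i w u => B.rel i w u ∧ B.ideal i w
  | or w φ ψ => B.fml w (.or φ ψ)
  | and w φ ψ => B.fml w (.and φ ψ)
  | box w φ => B.fml w (.box φ)
  | dia w _ φ => B.fml w (.dia φ)
  | abox i w φ => B.fml w (.abox i φ)
  | adia i w u φ => B.rel i w u ∧ B.fml w (.adia i φ)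
  | obl i w φ => B.fml w (.obl i φ)
  | per i w u φ => B.ideal i u ∧ B.fml w (.per i φ)

/-- What a requirement demands of a branch: the active atoms and formulae of some premise of the
rule have been accumulated, for some choice of its eigenvariable. -/
def Conclusion (B : Branch n W) : Requirement n k W → Prop
  | refl i w => B.rel i w w
  | eucl i _ u v => B.rel i u v
  | ioa ws => ∃ u, ∀ i, B.rel i (ws i) u
  | apc i ws => ∃ m j, m < j ∧ B.rel i (ws m) (ws j)
  | d2 i => ∃ u, B.ideal i u
  | d3 i _ u => B.ideal i u
  | or w φ ψ => B.fml w φ ∧ B.fml w ψ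
  | and w φ ψ => B.fml w φ ∨ B.fml w ψ
  | box _ φ => ∃ u, B.fml u φ
  | abox i w φ => ∃ u, B.rel i w u ∧ B.fml u φ
  | obl i _ φ => ∃ u, B.ideal i u ∧ B.fml u φ
  | dia _ u φ | adia _ _ u φ | per _ _ u φ => B.fml u φ

theorem monotone_premise (r : Requirement n k W) : Monotone fun B => r.Premise B := by
  rintro B B' ⟨hR, hI, hF⟩
  cases r with
  | refl | ioa | apc | d2 => exact id
  | eucl => exact And.imp (hR _ _ _) (hR _ _ _)
  | d3 => exact And.imp (hR _ _ _) (hI _ _)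
  | adia => exact And.imp (hR _ _ _) (hF _ _)
  | per => exact And.imp (hI _ _) (hF _ _)
  | or | and | box | dia | abox | obl => exact hF _ _

theorem monotone_conclusion (r : Requirement n k W) : Monotone fun B => r.Conclusion B := by
  rintro B B' ⟨hR, hI, hF⟩
  cases r with
  | refl | eucl => exact hR _ _ _
  | ioa => exact Exists.imp fun _ h i => hR _ _ _ (h i)
  | apc => exact Exists.imp fun _ => Exists.imp fun _ => And.imp_right (hR _ _ _)
  | d2 => exact Exists.imp fun _ => hI _ _
  | d3 => exact hI _ _
  | or => exact And.imp (hF _ _) (hF _ _)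
  | and => exact Or.imp (hF _ _) (hF _ _)
  | box => exact Exists.imp fun _ => hF _ _
  | abox => exact Exists.imp fun _ => And.imp (hR _ _ _) (hF _ _)
  | obl => exact Exists.imp fun _ => And.imp (hI _ _) (hF _ _)
  | dia | adia | per => exact hF _ _

end Requirement

namespace Branch

variable {n k : ℕ} {W : Type*} {B : Branch n W}

/-- A Hintikka branch meets all requirements of `G3DS_n^k` and contains no complementary literals
at the same label. -/
structure Hintikka (k : ℕ) (B : Branch n W) : Prop where
  closed : ∀ r : Requirement n k W, r.Premise B → r.Conclusion B
  consistent : ∀ w p, B.fml w (.pos p) → ¬ B.fml w (.neg p)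

/-- The countermodel read off a Hintikka branch: its worlds are the labels, and an atom is true
where it does not occur. -/
def Hintikka.model (h : B.Hintikka k) : Model n k W where
  rel := B.rel
  ideal := B.ideal
  val p w := ¬ B.fml w (.pos p)
  rel_refl i w := h.closed (.refl i w) trivial
  rel_eucl hwu hwv := h.closed (.eucl _ _ _ _) ⟨hwu, hwv⟩
  ioa ws := h.closed (.ioa ws) trivial
  apc hk i ws := h.closed (.apc i ws) hk
  exists_ideal i := h.closed (.d2 i) trivial
  ideal_of_rel hwu hw := h.closed (.d3 _ _ _) ⟨hwu, hw⟩

theorem Hintikka.not_sat (h : B.Hintikka k) {φ : SFml n} {w : W} (hφ : B.fml w φ) :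
    ¬ h.model.Sat w φ := by
  induction φ generalizing w with
  | pos p => exact not_not.2 hφ
  | neg p => exact not_not.2 fun hp => h.consistent w p hp hφ
  | or φ ψ ihφ ihψ =>
    obtain ⟨hφ, hψ⟩ := h.closed (.or w φ ψ) hφ
    exact not_or.2 ⟨ihφ hφ, ihψ hψ⟩
  | and φ ψ ihφ ihψ =>
    exact not_and_or.2 ((h.closed (.and w φ ψ) hφ).imp ihφ ihψ)
  | box φ ih =>
    obtain ⟨u, hu⟩ := h.closed (.box w φ) hφ
    exact fun hs => ih hu (hs u)
  | dia φ ih => exact fun ⟨u, hs⟩ => ih (h.closed (.dia w u φ) hφ) hs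
  | abox i φ ih =>
    obtain ⟨u, hR, hu⟩ := h.closed (.abox i w φ) hφ
    exact fun hs => ih hu (hs u hR)
  | adia i φ ih => exact fun ⟨u, hR, hs⟩ => ih (h.closed (.adia i w u φ) ⟨hR, hφ⟩) hs
  | obl i φ ih =>
    obtain ⟨u, hI, hu⟩ := h.closed (.obl i w φ) hφ
    exact fun hs => ih hu (hs u hI)
  | per i φ ih => exact fun ⟨u, hI, hs⟩ => ih (h.closed (.per i w u φ) ⟨hI, hφ⟩) hs

end Branch

/-! ### Proof search in `G3DS_n^k` -/

theorem exists_ideal_forall_meets {P ι : Type*} [Preorder P] [Countable ι] {A C : ι → P → Prop}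
    (hA : ∀ i, Monotone (A i)) (h : ∀ i p, A i p → ∃ q ≥ p, C i q) (p : P) :
    ∃ I : Order.Ideal P, p ∈ I ∧ ∀ i, ∀ q ∈ I, A i q → ∃ r ∈ I, C i r := by
  have := Encodable.ofCountable ι
  let 𝒟 (i : ι) : Order.Cofinal P :=
    { carrier := {q | C i q ∨ ∀ r ≥ q, ¬ A i r}
      isCofinal q := by
        by_cases hq : ∃ r ≥ q, A i r
        · obtain ⟨r, hqr, hr⟩ := hq
          obtain ⟨s, hrs, hs⟩ := h i r hr
          exact ⟨s, .inl hs, hqr.trans hrs⟩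
        · exact ⟨q, .inr fun r hqr hr => hq ⟨r, hqr, hr⟩, le_rfl⟩ }
  refine ⟨Order.idealOfCofinals p 𝒟, Order.mem_idealOfCofinals p 𝒟, fun i q hq hAq => ?_⟩
  obtain ⟨r, hr, hrI⟩ := Order.cofinal_meets_idealOfCofinals p 𝒟 i
  obtain ⟨t, -, hqt, hrt⟩ := (Order.idealOfCofinals p 𝒟).directed q hq r hrI
  exact ⟨r, hrI, hr.resolve_right fun hr => hr t hrt (hA i hqt hAq)⟩

theorem exists_mem_ideal_and {P : Type*} [Preorder P] {I : Order.Ideal P} {p q : P → Prop}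
    (hp : Monotone p) (hq : Monotone q) (h : (∃ s ∈ I, p s) ∧ ∃ s ∈ I, q s) :
    ∃ s ∈ I, p s ∧ q s := by
  obtain ⟨⟨s, hs, hps⟩, t, ht, hqt⟩ := h
  obtain ⟨r, hr, hsr, htr⟩ := I.directed s hs t ht
  exact ⟨r, hr, hp hsr hps, hq htr hqt⟩

theorem exists_not_soccurs {n : ℕ} (RA : RAt n) (IA : DAt n) (Γ : SSeq n) :
    ∃ u, ¬ soccurs u RA IA Γ := by
  obtain ⟨u, hu⟩ := Infinite.exists_notMem_finset
    ((RA.bind fun a => {a.2.1, a.2.2}) + IA.map Prod.snd + Γ.map Prod.fst).toFinset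
  refine ⟨u, mt ?_ hu⟩
  simp only [Multiset.mem_toFinset, Multiset.mem_add, Multiset.mem_bind, Multiset.mem_map,
    Multiset.insert_eq_cons, Multiset.mem_cons, Multiset.mem_singleton]
  rintro (⟨i, w, v, m, h⟩ | ⟨i, m⟩ | ⟨φ, m⟩)
  · exact .inl (.inl ⟨_, m, h⟩)
  · exact .inl (.inr ⟨_, m, rfl⟩)
  · exact .inr ⟨_, m, rfl⟩

theorem exists_eq_cons_cons_of_mem {α : Type*} {s : Multiset α} {a b : α} (ha : a ∈ s)
    (hb : b ∈ s) (hab : a ≠ b) : ∃ t, s = a ::ₘ b ::ₘ t := by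
  obtain ⟨s, rfl⟩ := Multiset.exists_cons_of_mem ha
  obtain ⟨t, rfl⟩ := Multiset.exists_cons_of_mem ((Multiset.mem_cons.1 hb).resolve_left hab.symm)
  exact ⟨t, rfl⟩

namespace G3DS

variable {n k : ℕ} {RA : RAt n} {IA : DAt n} {Γ : SSeq n} {i : Fin (n + 1)} {w u v p : ℕ}
  {φ : SFml n}

theorem of_mem_pos_neg (hp : (w, .pos p) ∈ Γ) (hp' : (w, .neg p) ∈ Γ) : G3DS n k RA IA Γ := by
  obtain ⟨Γ, rfl⟩ := exists_eq_cons_cons_of_mem hp hp' (by simp)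
  exact .id RA IA Γ w p

theorem dia_of_mem (hφ : (w, .dia φ) ∈ Γ) (h : G3DS n k RA IA ((u, φ) ::ₘ Γ)) :
    G3DS n k RA IA Γ := by
  obtain ⟨Γ, rfl⟩ := Multiset.exists_cons_of_mem hφ
  rw [Multiset.cons_swap] at h
  exact h.diar

theorem adia_of_mem (hR : (i, w, u) ∈ RA) (hφ : (w, .adia i φ) ∈ Γ)
    (h : G3DS n k RA IA ((u, φ) ::ₘ Γ)) : G3DS n k RA IA Γ := by
  obtain ⟨RA, rfl⟩ := Multiset.exists_cons_of_mem hR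
  obtain ⟨Γ, rfl⟩ := Multiset.exists_cons_of_mem hφ
  rw [Multiset.cons_swap] at h
  exact .adiar trivial h

theorem per_of_mem (hI : (i, u) ∈ IA) (hφ : (w, .per i φ) ∈ Γ)
    (h : G3DS n k RA IA ((u, φ) ::ₘ Γ)) : G3DS n k RA IA Γ := by
  obtain ⟨IA, rfl⟩ := Multiset.exists_cons_of_mem hI
  obtain ⟨Γ, rfl⟩ := Multiset.exists_cons_of_mem hφ
  rw [Multiset.cons_swap] at h
  exact .operr trivial h

theorem euc_of_mem (hwu : (i, w, u) ∈ RA) (hwv : (i, w, v) ∈ RA)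
    (h : G3DS n k ((i, u, v) ::ₘ RA) IA Γ) : G3DS n k RA IA Γ := by
  rcases eq_or_ne u v with rfl | huv
  · -- `(euc_i)` needs two occurrences of the atom, but here `(ref_i)` yields the same conclusion.
    exact .refl trivial h
  · obtain ⟨RA, rfl⟩ := exists_eq_cons_cons_of_mem hwu hwv (by simp [huv])
    rw [Multiset.cons_swap, Multiset.cons_swap (i, u, v)] at h
    exact .euc trivial h

theorem d3_of_mem (hR : (i, w, u) ∈ RA) (hI : (i, w) ∈ IA) (h : G3DS n k RA ((i, u) ::ₘ IA) Γ) :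
    G3DS n k RA IA Γ := by
  obtain ⟨RA, rfl⟩ := Multiset.exists_cons_of_mem hR
  obtain ⟨IA, rfl⟩ := Multiset.exists_cons_of_mem hI
  rw [Multiset.cons_swap] at h
  exact .d3 trivial h

end G3DS

/-- The labelled formulae that a sequent accounts for. The rules `(∨r)`, `(∧r)`, `(□)`, `([i])` and
`(⊗_i)` of `G3DS_n^k` discard their principal formula; it remains covered by the formulae and atoms
that replace it. -/
inductive Covers {n : ℕ} (RA : RAt n) (IA : DAt n) (Γ : SSeq n) : ℕ → SFml n → Prop
  | mem {w φ} : (w, φ) ∈ Γ → Covers RA IA Γ w φ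
  | or {w φ ψ} : Covers RA IA Γ w φ → Covers RA IA Γ w ψ → Covers RA IA Γ w (.or φ ψ)
  | andLeft {w φ ψ} : Covers RA IA Γ w φ → Covers RA IA Γ w (.and φ ψ)
  | andRight {w φ ψ} : Covers RA IA Γ w ψ → Covers RA IA Γ w (.and φ ψ)
  | box {w u φ} : Covers RA IA Γ u φ → Covers RA IA Γ w (.box φ)
  | abox {w u i φ} : (i, w, u) ∈ RA → Covers RA IA Γ u φ → Covers RA IA Γ w (.abox i φ)
  | obl {w u i φ} : (i, u) ∈ IA → Covers RA IA Γ u φ → Covers RA IA Γ w (.obl i φ)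

namespace Covers

variable {n : ℕ} {RA RA' : RAt n} {IA IA' : DAt n} {Γ Γ' : SSeq n} {i : Fin (n + 1)} {w p : ℕ}
  {φ : SFml n}

theorem mono (h : Covers RA IA Γ w φ) (hR : RA ⊆ RA') (hI : IA ⊆ IA')
    (hΓ : ∀ w φ, (w, φ) ∈ Γ → Covers RA' IA' Γ' w φ) : Covers RA' IA' Γ' w φ := by
  induction h with
  | mem m => exact hΓ _ _ m
  | or _ _ ih ih' => exact .or ih ih'
  | andLeft _ ih => exact .andLeft ih
  | andRight _ ih => exact .andRight ih
  | box _ ih => exact .box ih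
  | abox m _ ih => exact .abox (hR m) ih
  | obl m _ ih => exact .obl (hI m) ih

theorem mem_of_pos (h : Covers RA IA Γ w (.pos p)) : (w, .pos p) ∈ Γ := by
  cases h with | mem m => exact m

theorem mem_of_neg (h : Covers RA IA Γ w (.neg p)) : (w, .neg p) ∈ Γ := by
  cases h with | mem m => exact m

theorem mem_of_dia (h : Covers RA IA Γ w (.dia φ)) : (w, .dia φ) ∈ Γ := by
  cases h with | mem m => exact m

theorem mem_of_adia (h : Covers RA IA Γ w (.adia i φ)) : (w, .adia i φ) ∈ Γ := by
  cases h with | mem m => exact m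

theorem mem_of_per (h : Covers RA IA Γ w (.per i φ)) : (w, .per i φ) ∈ Γ := by
  cases h with | mem m => exact m

end Covers

/-- A stage of a failed proof search: a sequent that is not derivable in `G3DS_n^k`. -/
structure Stage (n k : ℕ) where
  rel : RAt n
  ideal : DAt n
  fml : SSeq n
  underivable : ¬ G3DS n k rel ideal fml

namespace Stage

variable {n k : ℕ} {s : Stage n k} {RA : RAt n} {IA : DAt n} {Γ : SSeq n} {i : Fin (n + 1)}
  {w u : ℕ} {φ ψ : SFml n}

/-- What a stage contributes to the branch, including the formulae already decomposed. -/
def branch (s : Stage n k) : Branch n ℕ where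
  rel i w u := (i, w, u) ∈ s.rel
  ideal i u := (i, u) ∈ s.ideal
  fml := Covers s.rel s.ideal s.fml

/-- Stages are compared by their branches rather than by their sequents, so that decomposing a
formula moves to a larger stage. -/
instance : Preorder (Stage n k) :=
  Preorder.lift branch

theorem monotone_branch : Monotone (branch : Stage n k → Branch n ℕ) :=
  fun _ _ h => h

theorem monotone_rel (i : Fin (n + 1)) (w u : ℕ) :
    Monotone fun s : Stage n k => s.branch.rel i w u :=
  fun _ _ hst => hst.1 i w u

theorem monotone_ideal (i : Fin (n + 1)) (u : ℕ) :
    Monotone fun s : Stage n k => s.branch.ideal i u :=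
  fun _ _ hst => hst.2.1 i u

theorem monotone_fml (w : ℕ) (φ : SFml n) : Monotone fun s : Stage n k => s.branch.fml w φ :=
  fun _ _ hst => hst.2.2 w φ

theorem le_of_covers {s t : Stage n k} (hR : s.rel ⊆ t.rel) (hI : s.ideal ⊆ t.ideal)
    (hΓ : ∀ w φ, (w, φ) ∈ s.fml → Covers t.rel t.ideal t.fml w φ) : s ≤ t :=
  ⟨fun _ _ _ m => hR m, fun _ _ m => hI m, fun _ _ h => h.mono hR hI hΓ⟩

theorem le_of_eq_cons {s t : Stage n k} (hs : s.fml = (w, φ) ::ₘ Γ) (hR : s.rel ⊆ t.rel)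
    (hI : s.ideal ⊆ t.ideal) (hΓ : Γ ⊆ t.fml) (hφ : t.branch.fml w φ) : s ≤ t :=
  le_of_covers hR hI fun v ψ m => by
    rcases Multiset.mem_cons.1 (hs ▸ m) with m | m
    · cases m; exact hφ
    · exact .mem (hΓ m)

theorem exists_ge_rel (h : ¬ G3DS n k ((i, w, u) ::ₘ s.rel) s.ideal s.fml) :
    ∃ t ≥ s, t.branch.rel i w u :=
  ⟨⟨_, _, _, h⟩, le_of_covers (Multiset.subset_cons _ _) (.refl _) fun _ _ => .mem,
    Multiset.mem_cons_self _ _⟩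

theorem exists_ge_ideal (h : ¬ G3DS n k s.rel ((i, u) ::ₘ s.ideal) s.fml) :
    ∃ t ≥ s, t.branch.ideal i u :=
  ⟨⟨_, _, _, h⟩, le_of_covers (.refl _) (Multiset.subset_cons _ _) fun _ _ => .mem,
    Multiset.mem_cons_self _ _⟩

theorem exists_ge_fml (h : ¬ G3DS n k s.rel s.ideal ((u, φ) ::ₘ s.fml)) :
    ∃ t ≥ s, t.branch.fml u φ :=
  ⟨⟨_, _, _, h⟩, le_of_covers (.refl _) (.refl _) fun _ _ m => .mem (Multiset.mem_cons_of_mem m),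
    .mem (Multiset.mem_cons_self _ _)⟩

theorem exists_ge_ioa (s : Stage n k) (ws : Fin (n + 1) → ℕ) :
    ∃ t ≥ s, ∃ u, ∀ i, t.branch.rel i (ws i) u := by
  obtain ⟨u, hu⟩ := exists_not_soccurs s.rel s.ideal s.fml
  let t : Stage n k := ⟨_, _, _, fun d => s.underivable (.ioa ws u hu d)⟩
  exact ⟨t, le_of_covers (Multiset.subset_add_right ..) (.refl _) fun _ _ => .mem, u, fun i =>
    Multiset.mem_add.2 (.inl (Multiset.mem_map_of_mem (fun i => (i, ws i, u)) (Finset.mem_univ i)))⟩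

theorem exists_ge_apc (s : Stage n k) (hk : 0 < k) (i : Fin (n + 1)) (ws : Fin (k + 1) → ℕ) :
    ∃ t ≥ s, ∃ m j, m < j ∧ t.branch.rel i (ws m) (ws j) := by
  obtain ⟨m, j, hmj, h⟩ : ∃ m j : Fin (k + 1), m < j ∧
      ¬ G3DS n k ((i, ws m, ws j) ::ₘ s.rel) s.ideal s.fml := by
    by_contra! h
    exact s.underivable (.apc hk i ws h)
  obtain ⟨t, hst, ht⟩ := exists_ge_rel h
  exact ⟨t, hst, m, j, hmj, ht⟩

theorem exists_ge_d2 (s : Stage n k) (i : Fin (n + 1)) : ∃ t ≥ s, ∃ u, t.branch.ideal i u := by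
  obtain ⟨u, hu⟩ := exists_not_soccurs s.rel s.ideal s.fml
  obtain ⟨t, hst, ht⟩ := exists_ge_ideal fun d => s.underivable (.d2 (i := i) trivial hu d)
  exact ⟨t, hst, u, ht⟩

theorem exists_ge_or (h : s.branch.fml w (.or φ ψ)) :
    ∃ t ≥ s, t.branch.fml w φ ∧ t.branch.fml w ψ := by
  cases h with
  | or hφ hψ => exact ⟨s, le_rfl, hφ, hψ⟩
  | mem m =>
    obtain ⟨Γ, hΓ⟩ := Multiset.exists_cons_of_mem m
    let t : Stage n k := ⟨s.rel, s.ideal, (w, φ) ::ₘ (w, ψ) ::ₘ Γ,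
      fun d => s.underivable (hΓ ▸ d.orr)⟩
    have hφ : t.branch.fml w φ := .mem (by simp [t])
    have hψ : t.branch.fml w ψ := .mem (by simp [t])
    exact ⟨t, le_of_eq_cons hΓ (.refl _) (.refl _) (fun _ m => by simp [t, m]) (.or hφ hψ), hφ, hψ⟩

theorem exists_ge_and (h : s.branch.fml w (.and φ ψ)) :
    ∃ t ≥ s, t.branch.fml w φ ∨ t.branch.fml w ψ := by
  cases h with
  | andLeft hφ => exact ⟨s, le_rfl, .inl hφ⟩
  | andRight hψ => exact ⟨s, le_rfl, .inr hψ⟩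
  | mem m =>
    obtain ⟨Γ, hΓ⟩ := Multiset.exists_cons_of_mem m
    by_cases dφ : G3DS n k s.rel s.ideal ((w, φ) ::ₘ Γ)
    · let t : Stage n k := ⟨s.rel, s.ideal, (w, ψ) ::ₘ Γ,
        fun dψ => s.underivable (hΓ ▸ dφ.andr dψ)⟩
      have hψ : t.branch.fml w ψ := .mem (Multiset.mem_cons_self _ _)
      exact ⟨t, le_of_eq_cons hΓ (.refl _) (.refl _) (Multiset.subset_cons _ _)
        (.andRight hψ), .inr hψ⟩
    · let t : Stage n k := ⟨s.rel, s.ideal, (w, φ) ::ₘ Γ, dφ⟩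
      have hφ : t.branch.fml w φ := .mem (Multiset.mem_cons_self _ _)
      exact ⟨t, le_of_eq_cons hΓ (.refl _) (.refl _) (Multiset.subset_cons _ _)
        (.andLeft hφ), .inl hφ⟩

theorem exists_ge_box (h : s.branch.fml w (.box φ)) : ∃ t ≥ s, ∃ u, t.branch.fml u φ := by
  cases h with
  | box hu => exact ⟨s, le_rfl, _, hu⟩
  | mem m =>
    obtain ⟨Γ, hΓ⟩ := Multiset.exists_cons_of_mem m
    obtain ⟨u, hu⟩ := exists_not_soccurs s.rel s.ideal s.fml
    rw [hΓ] at hu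
    let t : Stage n k := ⟨s.rel, s.ideal, (u, φ) ::ₘ Γ,
      fun d => s.underivable (hΓ ▸ d.boxr hu)⟩
    have hφ : t.branch.fml u φ := .mem (Multiset.mem_cons_self _ _)
    exact ⟨t, le_of_eq_cons hΓ (.refl _) (.refl _) (Multiset.subset_cons _ _) (.box hφ), u, hφ⟩

theorem exists_ge_abox (h : s.branch.fml w (.abox i φ)) :
    ∃ t ≥ s, ∃ u, t.branch.rel i w u ∧ t.branch.fml u φ := by
  cases h with
  | abox hR hu => exact ⟨s, le_rfl, _, hR, hu⟩
  | mem m =>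
    obtain ⟨Γ, hΓ⟩ := Multiset.exists_cons_of_mem m
    obtain ⟨u, hu⟩ := exists_not_soccurs s.rel s.ideal s.fml
    rw [hΓ] at hu
    let t : Stage n k := ⟨(i, w, u) ::ₘ s.rel, s.ideal, (u, φ) ::ₘ Γ,
      fun d => s.underivable (hΓ ▸ d.aboxr hu)⟩
    have hR : t.branch.rel i w u := Multiset.mem_cons_self _ _
    have hφ : t.branch.fml u φ := .mem (Multiset.mem_cons_self _ _)
    exact ⟨t, le_of_eq_cons hΓ (Multiset.subset_cons _ _) (.refl _) (Multiset.subset_cons _ _)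
      (.abox hR hφ), u, hR, hφ⟩

theorem exists_ge_obl (h : s.branch.fml w (.obl i φ)) :
    ∃ t ≥ s, ∃ u, t.branch.ideal i u ∧ t.branch.fml u φ := by
  cases h with
  | obl hI hu => exact ⟨s, le_rfl, _, hI, hu⟩
  | mem m =>
    obtain ⟨Γ, hΓ⟩ := Multiset.exists_cons_of_mem m
    obtain ⟨u, hu⟩ := exists_not_soccurs s.rel s.ideal s.fml
    rw [hΓ] at hu
    let t : Stage n k := ⟨s.rel, (i, u) ::ₘ s.ideal, (u, φ) ::ₘ Γ,
      fun d => s.underivable (hΓ ▸ d.oblr hu)⟩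
    have hI : t.branch.ideal i u := Multiset.mem_cons_self _ _
    have hφ : t.branch.fml u φ := .mem (Multiset.mem_cons_self _ _)
    exact ⟨t, le_of_eq_cons hΓ (.refl _) (Multiset.subset_cons _ _) (Multiset.subset_cons _ _)
      (.obl hI hφ), u, hI, hφ⟩

theorem exists_ge_conclusion (r : Requirement n k ℕ) (hr : r.Premise s.branch) :
    ∃ t ≥ s, r.Conclusion t.branch :=
  match r with
  | .refl _ _ => exists_ge_rel fun d => s.underivable (.refl trivial d)
  | .eucl _ _ _ _ => exists_ge_rel fun d => s.underivable (G3DS.euc_of_mem hr.1 hr.2 d)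
  | .ioa ws => s.exists_ge_ioa ws
  | .apc i ws => s.exists_ge_apc hr i ws
  | .d2 i => s.exists_ge_d2 i
  | .d3 _ _ _ => exists_ge_ideal fun d => s.underivable (G3DS.d3_of_mem hr.1 hr.2 d)
  | .or _ _ _ => exists_ge_or hr
  | .and _ _ _ => exists_ge_and hr
  | .box _ _ => exists_ge_box hr
  | .dia _ _ _ => exists_ge_fml fun d =>
    s.underivable (G3DS.dia_of_mem (Covers.mem_of_dia hr) d)
  | .abox _ _ _ => exists_ge_abox hr
  | .adia _ _ _ _ => exists_ge_fml fun d =>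
    s.underivable (G3DS.adia_of_mem hr.1 (Covers.mem_of_adia hr.2) d)
  | .obl _ _ _ => exists_ge_obl hr
  | .per _ _ _ _ => exists_ge_fml fun d =>
    s.underivable (G3DS.per_of_mem hr.1 (Covers.mem_of_per hr.2) d)

/-- The branch accumulated along an ideal of stages. -/
def limit (I : Order.Ideal (Stage n k)) : Branch n ℕ where
  rel i w u := ∃ s ∈ I, s.branch.rel i w u
  ideal i u := ∃ s ∈ I, s.branch.ideal i u
  fml w φ := ∃ s ∈ I, s.branch.fml w φ

variable {I : Order.Ideal (Stage n k)}

theorem branch_le_limit (hs : s ∈ I) : s.branch ≤ limit I :=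
  ⟨fun _ _ _ h => ⟨s, hs, h⟩, fun _ _ h => ⟨s, hs, h⟩, fun _ _ h => ⟨s, hs, h⟩⟩

theorem exists_premise_of_limit (r : Requirement n k ℕ) (hr : r.Premise (limit I)) :
    ∃ s ∈ I, r.Premise s.branch := by
  cases r with
  | refl | ioa | apc | d2 => exact I.nonempty.imp fun _ hs => ⟨hs, hr⟩
  | eucl => exact exists_mem_ideal_and (monotone_rel _ _ _) (monotone_rel _ _ _) hr
  | d3 => exact exists_mem_ideal_and (monotone_rel _ _ _) (monotone_ideal _ _) hr
  | adia => exact exists_mem_ideal_and (monotone_rel _ _ _) (monotone_fml _ _) hr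
  | per => exact exists_mem_ideal_and (monotone_ideal _ _) (monotone_fml _ _) hr
  | or | and | box | dia | abox | obl => exact hr

theorem exists_hintikka_ge (s : Stage n k) : ∃ B : Branch n ℕ, s.branch ≤ B ∧ B.Hintikka k := by
  obtain ⟨I, hs, hI⟩ := exists_ideal_forall_meets
    (fun r : Requirement n k ℕ => r.monotone_premise.comp monotone_branch)
    (fun r _ => exists_ge_conclusion r) s
  refine ⟨limit I, branch_le_limit hs, fun r hr => ?_, fun w p hp hp' => ?_⟩
  · obtain ⟨t, ht, htr⟩ := exists_premise_of_limit r hr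
    obtain ⟨t', ht', htr'⟩ := hI r t ht htr
    exact r.monotone_conclusion (branch_le_limit ht') htr'
  · obtain ⟨t, -, htp, htp'⟩ :=
      exists_mem_ideal_and (monotone_fml _ _) (monotone_fml _ _) ⟨hp, hp'⟩
    exact t.underivable (.of_mem_pos_neg (Covers.mem_of_pos htp) (Covers.mem_of_neg htp'))

end Stage

theorem G3DS.of_valid {n k : ℕ} {RA : RAt n} {IA : DAt n} {Γ : SSeq n}
    (h : ∀ M : Model n k ℕ, M.Valid RA IA Γ) : G3DS n k RA IA Γ := by
  by_contra hn
  obtain ⟨B, ⟨hR, hI, hF⟩, hB⟩ := Stage.exists_hintikka_ge ⟨RA, IA, Γ, hn⟩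
  exact h hB.model id ⟨hR, hI, fun w φ m => hB.not_sat (hF w φ (.mem m))⟩

theorem dslStr_to_g3DS_general {n k : ℕ} {gR gG gS : Prop} {RA : RAt n} {IA : DAt n} {Γ : SSeq n}
    (h : SDer n k gR gG gS RA IA Γ) : G3DS n k RA IA Γ :=
  .of_valid fun M => h.valid M

/-- For all `n, k ∈ ℕ`, every labelled sequent derivable in
`DS_n^k L + Str(DS)` is derivable in `G3DS_n^k`. -/
theorem dslStr_to_g3DS (n k : ℕ) (RA : RAt n) (IA : DAt n) (Γ : SSeq n)
    (h : DSLStr n k RA IA Γ) : G3DS n k RA IA Γ :=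
  dslStr_to_g3DS_general h

end DeonticStit
end
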